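/- Let d ≥ 1 and let (M_n)_{n≥1} be a sequence of (d+1)×(d+1) complex matrices of block form M_n = [[A_n, R_n],[0ᵀ, a_n]] with A_n ∈ ℂ^{d×d}, R_n ∈ ℂ^d, a_n ∈ ℂ. Define g(x) := limsup_{n→∞} (1/n) log‖A_n⋯A_1 x‖ for x ∈ ℂ^d and f(Y) := limsup_{n→∞} (1/n) log‖M_n⋯M_1 Y‖ for Y ∈ ℂ^{d+1}, with values in ℝ ∪ {−∞}. Assume: (i) there exist reals μ_1 > μ_2 > ⋯ > μ_d and linear subspaces {0} = U_{d+1} ⊂ U_d ⊂ ⋯ ⊂ U_1 = ℂ^d with dim U_i = d+1−i such that for x ∈ ℂ^d, g(x) = μ_i if and only if x ∈ U_i \ U_{i+1}; (ii) there exists λ_a ∈ ℝ with λ_a ∉ {μ_1,…,μ_d} such that, writing ν_1 > ν_2 > ⋯ > ν_{d+1} for the decreasing enumeration of {μ_1,…,μ_d} ∪ {λ_a}, there exist linear subspaces {0} = V_{d+2} ⊂ V_{d+1} ⊂ ⋯ ⊂ V_1 = ℂ^{d+1} with dim V_i = d+2−i such that for Y ∈ ℂ^{d+1}, f(Y) =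 ν_i if and only if Y ∈ V_i \ V_{i+1}. Then for every i ∈ {1,…,d} there exists X_0 ∈ ℂ^d such that f([X_0ᵀ, 1]ᵀ) = max{μ_i, λ_a}. -/

import Mathlib

/-!
Lyapunov exponents are ultrametric: `f (Y + Z) = max (f Y) (f Z)` whenever `f Y ≠ f Z`, and `f` is
invariant under nonzero scaling. The hyperplane of vectors with last coordinate `0` is invariant
under the block matrices, and `f` restricts to `g` there. Since `g` omits the value `λ_a`, a vector
`Y` with `f Y = λ_a` lies off this hyperplane and can be rescaled to have last coordinate `1`.
Adding to it any `(x, 0)` with `g x = μ i` then gives an augmented vector of exponent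
`max (μ i) λ_a`.
-/

open Filter

/-- The Euclidean norm of a vector in `ℂ^m`. -/
noncomputable def enorm {m : Type*} [Fintype m] (x : m → ℂ) : ℝ :=
  Real.sqrt (∑ i, ‖x i‖ ^ 2)

/-- The natural logarithm with values in `ℝ ∪ {−∞, ∞}`, sending `0` to `−∞`. -/
noncomputable def elog (r : ℝ) : EReal :=
  if r = 0 then ⊥ else ((Real.log r : ℝ) : EReal)

/-- The product `A n ⋯ A 1` (empty product for `n = 0`). -/
noncomputable def prodSeq {d : ℕ} (A : ℕ → Matrix (Fin d) (Fin d) ℂ) :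
    ℕ → Matrix (Fin d) (Fin d) ℂ
  | 0 => 1
  | n + 1 => A (n + 1) * prodSeq A n

/-- The Lyapunov exponent function of the matrix products `A n ⋯ A 1`:
`x ↦ limsup (1/n) log ‖A n ⋯ A 1 x‖`, with values in `ℝ ∪ {−∞, ∞}`. -/
noncomputable def lyap {d : ℕ} (A : ℕ → Matrix (Fin d) (Fin d) ℂ) (x : Fin d → ℂ) : EReal :=
  Filter.limsup (fun n : ℕ => elog (enorm ((prodSeq A n).mulVec x)) / ((n : ℝ) : EReal)) atTop

/-- The `(d+1) × (d+1)` block matrix `[[A, R], [0ᵀ, a]]`. -/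
noncomputable def blockM {d : ℕ} (A : Matrix (Fin d) (Fin d) ℂ) (R : Fin d → ℂ) (a : ℂ) :
    Matrix (Fin (d + 1)) (Fin (d + 1)) ℂ :=
  Matrix.of fun p q =>
    Fin.lastCases (Fin.lastCases a (fun _ => (0 : ℂ)) q)
      (fun i => Fin.lastCases (R i) (fun j => A i j) q) p

open ExpGrowth

section ExpGrowth

theorem expGrowthSup_enorm_add_le {E : Type*} [SeminormedAddGroup E] (u v : ℕ → E) :
    expGrowthSup (fun n => ‖u n + v n‖ₑ) ≤
      max (expGrowthSup fun n => ‖u n‖ₑ) (expGrowthSup fun n => ‖v n‖ₑ) := by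
  rw [← expGrowthSup_add]
  refine expGrowthSup_monotone fun n => ?_
  simp only [Pi.add_apply, enorm_eq_nnnorm]
  exact_mod_cast nnnorm_add_le (u n) (v n)

theorem expGrowthSup_enorm_add_of_ne {E : Type*} [SeminormedAddGroup E] {u v : ℕ → E}
    (h : expGrowthSup (fun n => ‖u n‖ₑ) ≠ expGrowthSup (fun n => ‖v n‖ₑ)) :
    expGrowthSup (fun n => ‖u n + v n‖ₑ) =
      max (expGrowthSup fun n => ‖u n‖ₑ) (expGrowthSup fun n => ‖v n‖ₑ) := by
  refine le_antisymm (expGrowthSup_enorm_add_le u v) ?_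
  rcases h.lt_or_gt with huv | hvu
  · have hv := expGrowthSup_enorm_add_le (fun n => -u n) (fun n => u n + v n)
    simp only [neg_add_cancel_left, enorm_neg] at hv
    rw [max_eq_right huv.le]
    exact (le_max_iff.1 hv).resolve_left huv.not_ge
  · have hu := expGrowthSup_enorm_add_le (fun n => u n + v n) (fun n => -v n)
    simp only [add_neg_cancel_right, enorm_neg] at hu
    rw [max_eq_left hvu.le]
    exact (le_max_iff.1 hu).resolve_right hvu.not_ge

variable {𝕜 E : Type*} [NormedDivisionRing 𝕜] [SeminormedAddCommGroup E] [Module 𝕜 E]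
  [NormSMulClass 𝕜 E]

theorem expGrowthSup_enorm_smul_le (c : 𝕜) (u : ℕ → E) :
    expGrowthSup (fun n => ‖c • u n‖ₑ) ≤ expGrowthSup fun n => ‖u n‖ₑ :=
  expGrowthSup_le_of_eventually_le (b := ‖c‖ₑ) enorm_ne_top <|
    .of_forall fun n => (enorm_smul c (u n)).le

theorem expGrowthSup_enorm_smul {c : 𝕜} (hc : c ≠ 0) (u : ℕ → E) :
    expGrowthSup (fun n => ‖c • u n‖ₑ) = expGrowthSup fun n => ‖u n‖ₑ := by
  refine le_antisymm (expGrowthSup_enorm_smul_le c u) ?_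
  simpa only [inv_smul_smul₀ hc] using expGrowthSup_enorm_smul_le c⁻¹ fun n => c • u n

end ExpGrowth

section Lyap

theorem enorm_eq_norm_toLp {m : Type*} [Fintype m] (x : m → ℂ) :
    _root_.enorm x = ‖WithLp.toLp 2 x‖ :=
  (EuclideanSpace.norm_eq _).symm

theorem elog_norm {E : Type*} [SeminormedAddGroup E] (x : E) : elog ‖x‖ = ENNReal.log ‖x‖ₑ := by
  simp only [elog, ← ofReal_norm, ENNReal.log_ofReal, (norm_nonneg x).ge_iff_eq']

variable {d : ℕ} (A : ℕ → Matrix (Fin d) (Fin d) ℂ)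

theorem lyap_eq_expGrowthSup (x : Fin d → ℂ) :
    lyap A x = expGrowthSup fun n => ‖WithLp.toLp 2 ((prodSeq A n).mulVec x)‖ₑ := by
  simp only [lyap, expGrowthSup, enorm_eq_norm_toLp, elog_norm, EReal.coe_natCast]

theorem lyap_zero : lyap A 0 = ⊥ := by
  simp only [lyap_eq_expGrowthSup, Matrix.mulVec_zero, WithLp.toLp_zero, enorm_zero]
  exact expGrowthSup_zero

variable {A}

theorem lyap_add_of_ne {x y : Fin d → ℂ} (h : lyap A x ≠ lyap A y) :
    lyap A (x + y) = max (lyap A x) (lyap A y) := by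
  simp only [lyap_eq_expGrowthSup, Matrix.mulVec_add, WithLp.toLp_add] at h ⊢
  exact expGrowthSup_enorm_add_of_ne h

theorem lyap_smul {c : ℂ} (hc : c ≠ 0) (x : Fin d → ℂ) : lyap A (c • x) = lyap A x := by
  simp only [lyap_eq_expGrowthSup, Matrix.mulVec_smul, WithLp.toLp_smul,
    expGrowthSup_enorm_smul hc]

end Lyap

section BlockMatrix

variable {d : ℕ}

theorem blockM_mulVec_snoc (A : Matrix (Fin d) (Fin d) ℂ) (R : Fin d → ℂ) (a : ℂ)
    (x : Fin d → ℂ) (t : ℂ) :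
    (blockM A R a).mulVec (Fin.snoc x t) = Fin.snoc (A.mulVec x + t • R) (a * t) := by
  ext p
  cases p using Fin.lastCases <;>
    simp [Matrix.mulVec, dotProduct, blockM, Fin.sum_univ_castSucc, mul_comm t]

theorem enorm_snoc_zero (x : Fin d → ℂ) :
    _root_.enorm (Fin.snoc x 0 : Fin (d + 1) → ℂ) = _root_.enorm x := by
  simp [_root_.enorm, Fin.sum_univ_castSucc]

variable (A : ℕ → Matrix (Fin d) (Fin d) ℂ) (R : ℕ → Fin d → ℂ) (a : ℕ → ℂ)

theorem prodSeq_blockM_mulVec_snoc_zero (x : Fin d → ℂ) (n : ℕ) :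
    (prodSeq (fun n => blockM (A n) (R n) (a n)) n).mulVec (Fin.snoc x 0) =
      Fin.snoc ((prodSeq A n).mulVec x) 0 := by
  induction n with
  | zero => simp only [prodSeq, Matrix.one_mulVec]
  | succ n ih =>
    simp only [prodSeq, ← Matrix.mulVec_mulVec, ih, blockM_mulVec_snoc, zero_smul, add_zero,
      mul_zero]

theorem lyap_blockM_snoc_zero (x : Fin d → ℂ) :
    lyap (fun n => blockM (A n) (R n) (a n)) (Fin.snoc x 0) = lyap A x := by
  simp only [lyap, prodSeq_blockM_mulVec_snoc_zero, enorm_snoc_zero]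

variable {A R a}

theorem last_ne_zero_of_lyap_blockM_notMem_range {Y : Fin (d + 1) → ℂ}
    (hY : lyap (fun n => blockM (A n) (R n) (a n)) Y ∉ Set.range (lyap A)) :
    Y (Fin.last d) ≠ 0 := by
  intro hlast
  refine hY ⟨Fin.init Y, ?_⟩
  rw [← lyap_blockM_snoc_zero A R a, ← hlast, Fin.snoc_init_self]

end BlockMatrix

theorem exists_and_not_succ {p : ℕ → Prop} {k m : ℕ} (hkm : k ≤ m) (hk : p k) (hm : ¬p m) :
    ∃ i, k ≤ i ∧ i < m ∧ p i ∧ ¬p (i + 1) := by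
  by_contra! h
  suffices ∀ i, k ≤ i → i ≤ m → p i from hm (this m hkm le_rfl)
  intro i hki
  induction i, hki using Nat.le_induction with
  | base => exact fun _ => hk
  | succ i hki ih => exact fun him => h i hki him (ih (Nat.le_of_succ_le him))

theorem notMem_range_lyap_of_flag {d m : ℕ} {A : ℕ → Matrix (Fin d) (Fin d) ℂ}
    {U : ℕ → Submodule ℂ (Fin d → ℂ)} (hbot : U (m + 1) = ⊥) (htop : U 1 = ⊤) {c : EReal}
    (hc : c ≠ ⊥) (hU : ∀ x i, 1 ≤ i → i ≤ m → x ∈ U i → x ∉ U (i + 1) → lyap A x ≠ c) :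
    c ∉ Set.range (lyap A) := by
  rintro ⟨x, rfl⟩
  have hx : x ∉ U (m + 1) := by
    rw [hbot, Submodule.mem_bot]
    rintro rfl
    exact hc (lyap_zero A)
  obtain ⟨i, hi, him, hxi, hxi'⟩ := exists_and_not_succ (p := fun i => x ∈ U i)
    (Nat.le_add_left 1 m) (by simp only [htop, Submodule.mem_top]) hx
  exact hU x i hi (Nat.le_of_lt_succ him) hxi hxi' rfl

theorem augmented_initial_state_attains_lyapunov_general {d : ℕ}
    (A : ℕ → Matrix (Fin d) (Fin d) ℂ) (R : ℕ → Fin d → ℂ) (a : ℕ → ℂ) {lamA : EReal}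
    (hA : lamA ∉ Set.range (lyap A))
    (hM : lamA ∈ Set.range (lyap fun n => blockM (A n) (R n) (a n))) (x : Fin d → ℂ) :
    ∃ X0 : Fin d → ℂ,
      lyap (fun n => blockM (A n) (R n) (a n)) (Fin.snoc X0 1) = max (lyap A x) lamA := by
  obtain ⟨Y, rfl⟩ := hM
  have hlast : Y (Fin.last d) ≠ 0 := last_ne_zero_of_lyap_blockM_notMem_range hA
  let Z : Fin (d + 1) → ℂ := Fin.snoc x 0 + (Y (Fin.last d))⁻¹ • Y
  have hZlast : Z (Fin.last d) = 1 := by simp [Z, hlast]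
  refine ⟨Fin.init Z, ?_⟩
  rw [← hZlast, Fin.snoc_init_self, lyap_add_of_ne] <;>
    rw [lyap_blockM_snoc_zero, lyap_smul (inv_ne_zero hlast)]
  exact fun h => hA ⟨x, h⟩

/-- deterministic core of the paper's Theorem 1. Let `M n` be block matrices
`[[A n, R n], [0ᵀ, a n]]`, and let `g = lyap A` and `f = lyap M` be the Lyapunov exponent
functions of the products `A n ⋯ A 1` and `M n ⋯ M 1`. Assume the Oseledets filtration
structure: (i) `g` takes `d` distinct real values `μ 1 > ⋯ > μ d` on the successive differences
of a full flag `{0} = U (d+1) ⊂ ⋯ ⊂ U 1 = ℂ^d` with `dim (U i) = d + 1 − i`; (ii) there is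
`λ_a ∈ ℝ`, distinct from the `μ i`, such that `f` takes the `d + 1` distinct values
`ν 1 > ⋯ > ν (d+1)` enumerating `{μ 1, …, μ d} ∪ {λ_a}` on the successive differences of a full
flag `{0} = V (d+2) ⊂ ⋯ ⊂ V 1 = ℂ^{d+1}` with `dim (V i) = d + 2 − i`. Then for every
`i ∈ {1, …, d}` there exists `X₀ ∈ ℂ^d` with `f ([X₀ᵀ, 1]ᵀ) = max {μ i, λ_a}`. -/
theorem augmented_initial_state_attains_lyapunov
    (d : ℕ) (hd : 1 ≤ d)
    (A : ℕ → Matrix (Fin d) (Fin d) ℂ) (R : ℕ → Fin d → ℂ) (a : ℕ → ℂ)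
    (μ : ℕ → ℝ) (hμ : ∀ i j, 1 ≤ i → i < j → j ≤ d → μ j < μ i)
    (U : ℕ → Submodule ℂ (Fin d → ℂ))
    (hUbot : U (d + 1) = ⊥) (hUtop : U 1 = ⊤)
    (hUchain : ∀ i, 1 ≤ i → i ≤ d → U (i + 1) < U i)
    (hUdim : ∀ i, 1 ≤ i → i ≤ d + 1 → Module.finrank ℂ (U i) = d + 1 - i)
    (hUiff : ∀ (x : Fin d → ℂ) (i : ℕ), 1 ≤ i → i ≤ d →
      (lyap A x = ((μ i : ℝ) : EReal) ↔ x ∈ U i ∧ x ∉ U (i + 1)))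
    (lamA : ℝ) (hlamA : ∀ i, 1 ≤ i → i ≤ d → lamA ≠ μ i)
    (ν : ℕ → ℝ) (hν : ∀ i j, 1 ≤ i → i < j → j ≤ d + 1 → ν j < ν i)
    (hνset : ∀ r : ℝ,
      (∃ i, 1 ≤ i ∧ i ≤ d + 1 ∧ ν i = r) ↔ ((∃ i, 1 ≤ i ∧ i ≤ d ∧ μ i = r) ∨ r = lamA))
    (V : ℕ → Submodule ℂ (Fin (d + 1) → ℂ))
    (hVbot : V (d + 2) = ⊥) (hVtop : V 1 = ⊤)
    (hVchain : ∀ i, 1 ≤ i → i ≤ d + 1 → V (i + 1) < V i)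
    (hVdim : ∀ i, 1 ≤ i → i ≤ d + 2 → Module.finrank ℂ (V i) = d + 2 - i)
    (hViff : ∀ (Y : Fin (d + 1) → ℂ) (i : ℕ), 1 ≤ i → i ≤ d + 1 →
      (lyap (fun n => blockM (A n) (R n) (a n)) Y = ((ν i : ℝ) : EReal) ↔
        Y ∈ V i ∧ Y ∉ V (i + 1))) :
    ∀ i : ℕ, 1 ≤ i → i ≤ d → ∃ X0 : Fin d → ℂ,
      lyap (fun n => blockM (A n) (R n) (a n)) (Fin.snoc X0 (1 : ℂ)) =
        ((max (μ i) lamA : ℝ) : EReal) := by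
  intro i hi hid
  obtain ⟨x, hx⟩ := SetLike.exists_of_lt (hUchain i hi hid)
  obtain ⟨k, hk, hkd, hνk⟩ := (hνset lamA).2 (Or.inr rfl)
  obtain ⟨Y, hY⟩ := SetLike.exists_of_lt (hVchain k hk hkd)
  have hA : (lamA : EReal) ∉ Set.range (lyap A) :=
    notMem_range_lyap_of_flag hUbot hUtop (EReal.coe_ne_bot lamA) fun y j hj hjd hyj hyj' =>
      (hUiff y j hj hjd).2 ⟨hyj, hyj'⟩ ▸ EReal.coe_injective.ne (hlamA j hj hjd).symm
  rw [EReal.coe_strictMono.monotone.map_max, ← (hUiff x i hi hid).2 hx]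
  exact augmented_initial_state_attains_lyapunov_general A R a hA
    ⟨Y, hνk ▸ (hViff Y k hk hkd).2 hY⟩ x
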